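/- For the weight a = (4,6,7) (the weight of the Q₁₁-singularity), there exist 3×3 matrices C and D with non-negative integer entries such that |det D| = 1, B_a = C·D, (4,6,7) = (1,1,1)·D, and f_C has an isolated critical point at the origin of ℂ³ (all partial derivatives of f_C vanish at 0, and there is a punctured neighborhood of 0 containing no critical point of f_C); moreover any such C satisfies |det C| = 18. -/

import Mathlib

open Matrix BigOperators

noncomputable section

/-- `f_C(x,y,z) = Σ_{i=1}^{3} x^{c_{i1}} y^{c_{i2}} z^{c_{i3}}` for a 3×3 matrix `C`
with non-negative integer entries. -/
def fC (C : Matrix (Fin 3) (Fin 3) ℕ) : (Fin 3 → ℂ) → ℂ :=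
  fun v => ∑ i : Fin 3, ∏ j : Fin 3, v j ^ C i j

/-- `φ_D(u₁,u₂,u₃) = (u₁^{d_{i1}} u₂^{d_{i2}} u₃^{d_{i3}})_{i=1}^{3}`. -/
def phiD (D : Matrix (Fin 3) (Fin 3) ℕ) : (Fin 3 → ℂ) → (Fin 3 → ℂ) :=
  fun u i => ∏ j : Fin 3, u j ^ D i j

/-- The matrix `B_a` with rows `(a₁+1,a₂,a₃)`, `(a₁,a₂+1,a₃)`, `(a₁,a₂,a₃+1)`. -/
def Bmat (a : Fin 3 → ℕ) : Matrix (Fin 3) (Fin 3) ℕ :=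
  fun i j => a j + if i = j then 1 else 0

/-- `G_a(u₁,u₂,u₃) = u₁^{a₁+1}u₂^{a₂}u₃^{a₃} + u₁^{a₁}u₂^{a₂+1}u₃^{a₃} + u₁^{a₁}u₂^{a₂}u₃^{a₃+1}`. -/
def Ga (a : Fin 3 → ℕ) : (Fin 3 → ℂ) → ℂ :=
  fun u => u 0 ^ (a 0 + 1) * u 1 ^ a 1 * u 2 ^ a 2
         + u 0 ^ a 0 * u 1 ^ (a 1 + 1) * u 2 ^ a 2
         + u 0 ^ a 0 * u 1 ^ a 1 * u 2 ^ (a 2 + 1)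

/-- `H_a(u₁,u₂,u₃) = u₁^{a₁}u₂^{a₂}u₃^{a₃}`. -/
def Ha (a : Fin 3 → ℕ) : (Fin 3 → ℂ) → ℂ :=
  fun u => u 0 ^ a 0 * u 1 ^ a 1 * u 2 ^ a 2

/-- Determinant of a matrix of natural numbers, computed over `ℤ`. -/
def detZ (M : Matrix (Fin 3) (Fin 3) ℕ) : ℤ :=
  (M.map (fun n : ℕ => (n : ℤ))).det

/-- `f` has an isolated critical point at the origin of `ℂ³`: the derivative of `f`
vanishes at `0`, and there is a punctured neighborhood of `0` containing no critical
point of `f`. -/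
def IsolatedCriticalAtZero (f : (Fin 3 → ℂ) → ℂ) : Prop :=
  fderiv ℂ f 0 = 0 ∧
  ∃ ε : ℝ, ε > 0 ∧ ∀ p : Fin 3 → ℂ, p ≠ 0 → ‖p‖ < ε → fderiv ℂ f p ≠ 0

/-- The witness polynomial `x z^3 + y^3 z + x^2` and its derivative. -/
theorem fC_hasFDerivAt (p : Fin 3 → ℂ) :
    ∃ L : (Fin 3 → ℂ) →L[ℂ] ℂ, HasFDerivAt (fC !![1,0,3;0,3,1;2,0,0]) L p ∧
      ∀ v, L v = (p 2 ^ 3 + 2 * p 0) * v 0 + (3 * p 1 ^ 2 * p 2) * v 1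
        + (3 * p 0 * p 2 ^ 2 + p 1 ^ 3) * v 2 := by
  have e : fC !![1,0,3;0,3,1;2,0,0] =
      fun v => v 0 * v 2 ^ 3 + v 1 ^ 3 * v 2 + v 0 ^ 2 := by
    funext v
    simp [fC, Fin.sum_univ_three, Fin.prod_univ_three]
  have h (i : Fin 3) : HasFDerivAt (fun v : Fin 3 → ℂ => v i)
      (ContinuousLinearMap.proj (R := ℂ) (φ := fun _ : Fin 3 => ℂ) i) p :=
    hasFDerivAt_apply i p
  rw [e]
  refine ⟨_, (((h 0).mul ((h 2).pow 3)).add (((h 1).pow 3).mul (h 2))).add ((h 0).pow 2), ?_⟩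
  intro v
  simp
  ring

theorem fC_isolated : IsolatedCriticalAtZero (fC !![1,0,3;0,3,1;2,0,0]) := by
  refine ⟨?_, 1, one_pos, ?_⟩
  · obtain ⟨L, hL, hv⟩ := fC_hasFDerivAt 0
    rw [hL.fderiv]
    ext v
    simp [hv]
  · intro p hp _ h0
    obtain ⟨L, hL, hv⟩ := fC_hasFDerivAt p
    rw [hL.fderiv] at h0
    subst h0
    have h1 := hv ![1,0,0]
    have h2 := hv ![0,1,0]
    have h3 := hv ![0,0,1]
    simp at h1 h2 h3
    apply hp
    have key : p 0 = 0 ∧ p 1 = 0 ∧ p 2 = 0 := by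
      rcases h2 with h | h
      · have hx : p 0 = -(p 2 ^ 3) / 2 := by linear_combination -h1 / 2
        rw [h, hx] at h3
        have hz : p 2 ^ 5 = 0 := by linear_combination 2 / 3 * h3
        have hz' : p 2 = 0 := by simpa using hz
        refine ⟨?_, h, hz'⟩
        rw [hx, hz']; simp
      · rw [h] at h1 h3
        simp at h1 h3
        exact ⟨h1, by simpa using h3.symm, h⟩
    obtain ⟨a, b, c⟩ := key
    funext i
    fin_cases i <;> simp [a, b, c]

theorem detZ_mul (C D : Matrix (Fin 3) (Fin 3) ℕ) : detZ (C * D) = detZ C * detZ D := by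
  unfold detZ
  rw [← Matrix.det_mul]
  have e : (C * D).map (fun n : ℕ => (n : ℤ)) =
      C.map (fun n : ℕ => (n : ℤ)) * D.map (fun n : ℕ => (n : ℤ)) := by
    ext i j
    simp [Matrix.mul_apply]
  rw [e]

theorem detZ_Bmat : detZ (Bmat ![4, 6, 7]) = 18 := by
  simp [detZ, Bmat, Matrix.det_fin_three]

theorem stmt_16 :
    (∃ C D : Matrix (Fin 3) (Fin 3) ℕ,
      |detZ D| = 1 ∧
      Bmat ![4, 6, 7] = C * D ∧
      (∀ j, (∑ i : Fin 3, D i j) = ![4, 6, 7] j) ∧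
      IsolatedCriticalAtZero (fC C)) ∧
    (∀ C D : Matrix (Fin 3) (Fin 3) ℕ,
      |detZ D| = 1 →
      Bmat ![4, 6, 7] = C * D →
      (∀ j, (∑ i : Fin 3, D i j) = ![4, 6, 7] j) →
      IsolatedCriticalAtZero (fC C) →
      |detZ C| = 18) := by
  refine ⟨⟨!![1,0,3;0,3,1;2,0,0], !![2,3,4;1,2,2;1,1,1], ?_, ?_, ?_, fC_isolated⟩, ?_⟩
  · simp [detZ, Matrix.det_fin_three]
  · ext i j
    fin_cases i <;> fin_cases j <;> simp [Bmat, Matrix.mul_apply, Fin.sum_univ_three]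
  · intro j
    fin_cases j <;> simp [Fin.sum_univ_three]
  · intro C D hD hB _ _
    have h := detZ_mul C D
    rw [← hB, detZ_Bmat] at h
    have h' := congrArg abs h
    rw [abs_mul, hD, mul_one] at h'
    rw [← h']
    norm_num
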